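/- Let $c$ and $\mu$ be fixed real numbers with $c > 1$ and $0 < \mu \leq \frac{1}{3}$. There exist constants $c_0 = c_0(c, \mu) > 0$ and $X_0 = X_0(c, \mu)$ such that for every real $X \geq X_0$, setting $N = X^c$, the integral $B_1 = \int_{-\infty}^{\infty} e(-N\alpha)\, I(\alpha)^3 \, d\alpha$ converges absolutely, is a real number, and satisfies $B_1 \geq c_0 X^{3 - c}$. -/

import Mathlib

/-!
Substituting `t = X s` and rescaling `α` shows that the integral equals `X ^ (k - c)` times its
value at `X = 1`, where `k = 3` is the number of factors, so it suffices that this value is a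
positive real number. Only two properties of the phase `g t = t ^ c` matter for that: `g` is `C²`
with nonvanishing derivative on `[a, b]`, and the target value is `k * g x₀` with `a < x₀ < b`.

One integration by parts gives `∫ e(α g(t)) dt = O(1 / |α|)`, hence absolute convergence as soon
as `k ≥ 2`. Expanding the power, the integrand is `∫ e(α φ) dm` with `m` Lebesgue measure on the
cube `(a, b]^k` and `φ(t) = g(t₁) + ⋯ + g(t_k) - k g(x₀)`. Damping it by the Gaussian
`exp(-π δ² α²)` makes Fubini applicable and turns the integral into
`∫ δ⁻¹ exp(-π (φ / δ)²) dm`, which is real and at least `e^(-π) δ⁻¹ m{|φ| ≤ δ}`. The slab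
`{|φ| ≤ δ}` has measure at least a constant times `δ`: for `(t₁, …, t_(k-1))` in a neighbourhood
of the diagonal point the equation `φ = 0` can be solved for `t_k`, and `g` is Lipschitz. Now let
`δ → 0`.
-/

open MeasureTheory

/-- `e(t) = e^{2πit}`. -/
noncomputable def e (t : ℝ) : ℂ := Complex.exp (2 * Real.pi * Complex.I * t)

/-- `I(α) = ∫_{μX}^{X} e(α t^c) dt`. -/
noncomputable def I (c μ X : ℝ) (α : ℝ) : ℂ := ∫ t in (μ * X)..X, e (α * t ^ c)

open Set Filter Topology
open scoped FourierTransform NNReal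

/-! ### The additive character -/

lemma e_eq_fourierChar (t : ℝ) : e t = 𝐞 t := by
  rw [e, Real.fourierChar_apply]
  push_cast
  ring_nf

lemma norm_e (t : ℝ) : ‖e t‖ = 1 := by
  rw [e_eq_fourierChar, Circle.norm_coe]

@[fun_prop]
lemma continuous_e : Continuous e := by
  unfold e
  fun_prop

lemma e_add (s t : ℝ) : e (s + t) = e s * e t := by
  simp only [e_eq_fourierChar, AddChar.map_add_eq_mul, Circle.coe_mul]

lemma e_sum {ι : Type*} (s : Finset ι) (f : ι → ℝ) : e (∑ i ∈ s, f i) = ∏ i ∈ s, e (f i) := by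
  simp only [e, Complex.ofReal_sum, Finset.mul_sum, Complex.exp_sum]

lemma hasDerivAt_e_comp {f : ℝ → ℝ} {f' t : ℝ} (hf : HasDerivAt f f' t) :
    HasDerivAt (fun t => e (f t)) (2 * Real.pi * Complex.I * f' * e (f t)) t := by
  have he : HasDerivAt e (2 * Real.pi * Complex.I * e (f t)) (f t) := by
    simpa only [← e_eq_fourierChar] using Real.hasDerivAt_fourierChar (f t)
  exact (he.scomp t hf).congr_deriv (by rw [Complex.real_smul]; ring)

/-! ### Oscillatory integrals -/

/-- The oscillatory integral `∫_a^b e(α g(t)) dt` with phase `g`. The integral `I c μ X` is the case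
`g t = t ^ c` on the interval from `μ X` to `X`. -/
noncomputable def oscillatoryIntegral (g : ℝ → ℝ) (a b α : ℝ) : ℂ := ∫ t in a..b, e (α * g t)

section Decay

variable {g : ℝ → ℝ} {a b : ℝ}

lemma continuous_oscillatoryIntegral (hg : Continuous g) :
    Continuous (oscillatoryIntegral g a b) := by
  unfold oscillatoryIntegral
  fun_prop

lemma norm_oscillatoryIntegral_le (α : ℝ) : ‖oscillatoryIntegral g a b α‖ ≤ |b - a| := by
  rw [oscillatoryIntegral, ← one_mul |b - a|]
  exact intervalIntegral.norm_integral_le_of_norm_le_const fun t _ => (norm_e (α * g t)).le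

lemma continuousAt_deriv_of_contDiffAt {t : ℝ} (hg : ContDiffAt ℝ 1 g t) :
    ContinuousAt (deriv g) t :=
  (hg.derivWithin (m := 0) (by norm_num)).continuousAt

lemma contDiffAt_inv_deriv {t : ℝ} (hg : ContDiffAt ℝ 2 g t) (hg' : deriv g t ≠ 0) :
    ContDiffAt ℝ 1 (fun s => (deriv g s)⁻¹) t :=
  (hg.derivWithin (m := 1) (by norm_num)).inv hg'

lemma mul_oscillatoryIntegral_eq (hg : ∀ t ∈ uIcc a b, ContDiffAt ℝ 2 g t)
    (hg' : ∀ t ∈ uIcc a b, deriv g t ≠ 0) (α : ℝ) :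
    2 * Real.pi * Complex.I * α * oscillatoryIntegral g a b α =
      ((deriv g b)⁻¹ : ℝ) * e (α * g b) - ((deriv g a)⁻¹ : ℝ) * e (α * g a) -
        ∫ t in a..b, (deriv (fun s => (deriv g s)⁻¹) t : ℝ) * e (α * g t) := by
  set w : ℝ → ℝ := fun s => (deriv g s)⁻¹
  have hw (t) (ht : t ∈ uIcc a b) : ContDiffAt ℝ 1 w t := contDiffAt_inv_deriv (hg t ht) (hg' t ht)
  have hderiv_w (t) (ht : t ∈ uIcc a b) :
      HasDerivAt (fun s => (w s : ℂ)) (deriv w t : ℝ) t :=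
    ((hw t ht).differentiableAt one_ne_zero).hasDerivAt.ofReal_comp
  have hderiv_e (t) (ht : t ∈ uIcc a b) : HasDerivAt (fun s => e (α * g s))
      (2 * Real.pi * Complex.I * (α * deriv g t : ℝ) * e (α * g t)) t :=
    hasDerivAt_e_comp (((hg t ht).differentiableAt two_ne_zero).hasDerivAt.const_mul α)
  have hcont_w' : ContinuousOn (fun t => ((deriv w t : ℝ) : ℂ)) (uIcc a b) := fun t ht =>
    (Complex.continuous_ofReal.continuousAt.comp
      (continuousAt_deriv_of_contDiffAt (hw t ht))).continuousWithinAt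
  have hcont_g' : ContinuousOn (fun t => ((α * deriv g t : ℝ) : ℂ)) (uIcc a b) := fun t ht =>
    (Complex.continuous_ofReal.continuousAt.comp (continuousAt_const.mul
      (continuousAt_deriv_of_contDiffAt ((hg t ht).of_le one_le_two)))).continuousWithinAt
  have hcont_e : ContinuousOn (fun t => e (α * g t)) (uIcc a b) := fun t ht =>
    (hderiv_e t ht).continuousAt.continuousWithinAt
  have hparts := intervalIntegral.integral_mul_deriv_eq_deriv_mul hderiv_w hderiv_e
    hcont_w'.intervalIntegrable ((continuousOn_const.mul hcont_g').mul hcont_e).intervalIntegrable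
  rw [← hparts, oscillatoryIntegral, ← intervalIntegral.integral_const_mul]
  refine intervalIntegral.integral_congr fun t ht => ?_
  have hcancel : ((deriv g t : ℝ) : ℂ) ≠ 0 := Complex.ofReal_ne_zero.2 (hg' t ht)
  simp only [w]
  push_cast
  field_simp

lemma exists_abs_mul_norm_oscillatoryIntegral_le (hg : ∀ t ∈ uIcc a b, ContDiffAt ℝ 2 g t)
    (hg' : ∀ t ∈ uIcc a b, deriv g t ≠ 0) :
    ∃ C : ℝ, ∀ α : ℝ, |α| * ‖oscillatoryIntegral g a b α‖ ≤ C := by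
  set w : ℝ → ℝ := fun s => (deriv g s)⁻¹
  refine ⟨|w b| + |w a| + |∫ t in a..b, ‖deriv w t‖|, fun α => ?_⟩
  have hremainder : ‖∫ t in a..b, (deriv w t : ℝ) * e (α * g t)‖ ≤ |∫ t in a..b, ‖deriv w t‖| := by
    simpa only [norm_mul, norm_e, mul_one, Complex.norm_real] using
      intervalIntegral.norm_integral_le_abs_integral_norm (a := a) (b := b) (μ := volume)
        (f := fun t => ((deriv w t : ℝ) : ℂ) * e (α * g t))
  calc |α| * ‖oscillatoryIntegral g a b α‖
      ≤ 2 * Real.pi * (|α| * ‖oscillatoryIntegral g a b α‖) :=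
        le_mul_of_one_le_left (by positivity) (by linarith [Real.pi_gt_three])
    _ = ‖2 * Real.pi * Complex.I * α * oscillatoryIntegral g a b α‖ := by
        simp [abs_of_pos Real.pi_pos, mul_assoc]
    _ ≤ ‖(w b : ℂ) * e (α * g b)‖ + ‖(w a : ℂ) * e (α * g a)‖ +
          ‖∫ t in a..b, (deriv w t : ℝ) * e (α * g t)‖ := by
        rw [mul_oscillatoryIntegral_eq hg hg']
        exact (norm_sub_le _ _).trans (by gcongr; exact norm_sub_le _ _)
    _ ≤ |w b| + |w a| + |∫ t in a..b, ‖deriv w t‖| := by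
        simp only [norm_mul, norm_e, mul_one, Complex.norm_real, Real.norm_eq_abs] at hremainder ⊢
        gcongr

end Decay

lemma integrable_pow_of_norm_le {F : ℝ → ℂ} {B C : ℝ} {k : ℕ} (hF : AEStronglyMeasurable F)
    (hB : ∀ α, ‖F α‖ ≤ B) (hC : ∀ α, |α| * ‖F α‖ ≤ C) (hk : 2 ≤ k) :
    Integrable (fun α => F α ^ k) := by
  obtain ⟨j, rfl⟩ := Nat.exists_eq_add_of_le hk
  refine (integrable_inv_one_add_sq.const_mul (B ^ j * (B ^ 2 + C ^ 2))).mono' (hF.pow _)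
    (Eventually.of_forall fun α => ?_)
  have hB2 : ‖F α‖ ^ 2 ≤ B ^ 2 := pow_le_pow_left₀ (norm_nonneg _) (hB α) 2
  have hC2 : α ^ 2 * ‖F α‖ ^ 2 ≤ C ^ 2 := by
    simpa only [mul_pow, sq_abs] using pow_le_pow_left₀ (by positivity) (hC α) 2
  have hBj : ‖F α‖ ^ j ≤ B ^ j := pow_le_pow_left₀ (norm_nonneg _) (hB α) j
  rw [norm_pow, ← div_eq_mul_inv, le_div_iff₀ (by positivity)]
  calc ‖F α‖ ^ (2 + j) * (1 + α ^ 2)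
      = ‖F α‖ ^ j * (‖F α‖ ^ 2 + α ^ 2 * ‖F α‖ ^ 2) := by ring
    _ ≤ B ^ j * (B ^ 2 + C ^ 2) := by gcongr; exact (pow_nonneg (norm_nonneg _) j).trans hBj

lemma integrable_e_mul_oscillatoryIntegral_pow {g : ℝ → ℝ} {a b : ℝ} {k : ℕ} (hcont : Continuous g)
    (hg : ∀ t ∈ uIcc a b, ContDiffAt ℝ 2 g t) (hg' : ∀ t ∈ uIcc a b, deriv g t ≠ 0)
    (hk : 2 ≤ k) (y : ℝ) :
    Integrable (fun α => e (-y * α) * oscillatoryIntegral g a b α ^ k) := by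
  obtain ⟨C, hC⟩ := exists_abs_mul_norm_oscillatoryIntegral_le hg hg'
  have hpow := integrable_pow_of_norm_le (continuous_oscillatoryIntegral hcont).aestronglyMeasurable
    norm_oscillatoryIntegral_le hC hk
  exact hpow.bdd_mul (c := 1) (Continuous.aestronglyMeasurable (by fun_prop))
    (Eventually.of_forall fun α => (norm_e _).le)

/-! ### Gaussian smoothing -/

/-- The Gaussian `exp(-π x²)`, normalised to be its own Fourier transform. -/
noncomputable def gaussian (x : ℝ) : ℝ := Real.exp (-Real.pi * x ^ 2)

@[fun_prop]
lemma continuous_gaussian : Continuous gaussian := by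
  unfold gaussian
  fun_prop

lemma gaussian_pos (x : ℝ) : 0 < gaussian x := Real.exp_pos _

lemma gaussian_le_one (x : ℝ) : gaussian x ≤ 1 :=
  Real.exp_le_one_iff.2 (by rw [neg_mul, neg_nonpos]; positivity)

lemma gaussian_one_le {x : ℝ} (hx : |x| ≤ 1) : gaussian 1 ≤ gaussian x := by
  have : x ^ 2 ≤ 1 ^ 2 := by simpa using hx
  exact Real.exp_le_exp.2 (mul_le_mul_of_nonpos_left this (by linarith [Real.pi_pos]))

lemma integrable_gaussian : Integrable gaussian :=
  integrable_exp_neg_mul_sq Real.pi_pos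

lemma integral_e_mul_gaussian (y : ℝ) : ∫ x, e (x * y) * gaussian x = gaussian y := by
  have hfourier := congrFun (fourier_gaussian_pi (b := 1) (by simp)) (-y)
  rw [Real.fourier_real_eq] at hfourier
  simpa [gaussian, e_eq_fourierChar, Circle.smul_def] using hfourier

lemma integral_e_mul_gaussian_mul {δ : ℝ} (hδ : 0 < δ) (y : ℝ) :
    ∫ α, e (α * y) * gaussian (δ * α) = (δ⁻¹ * gaussian (y / δ) : ℝ) := by
  have hscale (α : ℝ) : e (α * y) * gaussian (δ * α) =
      (fun x => e (x * (y / δ)) * gaussian x) (δ * α) := by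
    simp only
    congr 2
    field_simp
  simp_rw [hscale]
  rw [Measure.integral_comp_mul_left (fun x => e (x * (y / δ)) * gaussian x),
    integral_e_mul_gaussian, abs_of_pos (inv_pos.2 hδ), Complex.real_smul, Complex.ofReal_mul]

lemma tendsto_integral_mul_gaussian {F : ℝ → ℂ} (hF : Integrable F) :
    Tendsto (fun δ : ℝ => ∫ α, F α * gaussian (δ * α)) (𝓝[>] 0) (𝓝 (∫ α, F α)) := by
  have hwidth : Tendsto (fun δ : ℝ => (Real.pi * δ ^ 2)⁻¹) (𝓝[>] 0) atTop := by
    refine tendsto_inv_nhdsGT_zero.comp (tendsto_nhdsWithin_iff.2 ⟨?_, ?_⟩)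
    · exact (Continuous.tendsto' (by fun_prop) _ _ (by simp)).mono_left nhdsWithin_le_nhds
    · filter_upwards [self_mem_nhdsWithin] with δ (hδ : 0 < δ)
      exact mem_Ioi.2 (by positivity)
  refine ((Real.tendsto_integral_cexp_sq_smul hF).comp hwidth).congr fun δ => ?_
  refine integral_congr_ae (Eventually.of_forall fun α => ?_)
  simp only [inv_inv, gaussian, smul_eq_mul]
  rw [mul_comm, ← Complex.ofReal_pow, Real.norm_eq_abs, sq_abs]
  push_cast
  ring_nf

section CharacteristicIntegral

variable {Ω : Type*} [MeasurableSpace Ω] {m : Measure Ω} [IsFiniteMeasure m] {φ : Ω → ℝ}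

lemma integral_integral_e_mul_gaussian {δ : ℝ} (hφ : AEMeasurable φ m) (hδ : 0 < δ) :
    ∫ α, (∫ x, e (α * φ x) ∂m) * gaussian (δ * α) = (∫ x, δ⁻¹ * gaussian (φ x / δ) ∂m : ℝ) := by
  rw [← integral_complex_ofReal]
  simp_rw [← integral_e_mul_gaussian_mul hδ, ← integral_mul_const]
  apply integral_integral_swap
  have hgauss : Integrable (fun α : ℝ => (gaussian (δ * α) : ℂ)) :=
    (integrable_gaussian.comp_mul_left' hδ.ne').ofReal
  have hdom : Integrable (fun z : ℝ × Ω => (gaussian (δ * z.1) : ℂ)) (volume.prod m) :=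
    hgauss.comp_fst m
  refine hdom.mono ?_ (Eventually.of_forall fun z => ?_)
  · have hphase : AEMeasurable (fun z : ℝ × Ω => z.1 * φ z.2) (volume.prod m) :=
      measurable_fst.aemeasurable.mul hφ.comp_snd
    exact (continuous_e.comp_aestronglyMeasurable hphase.aestronglyMeasurable).mul
      hdom.aestronglyMeasurable
  · simp [Function.uncurry, norm_e]

lemma gaussian_one_mul_le_integral {δ κ : ℝ} (hφ : AEMeasurable φ m) (hδ : 0 < δ)
    (hκ : κ * δ ≤ m.real {x | |φ x| ≤ δ}) :
    gaussian 1 * κ ≤ ∫ x, δ⁻¹ * gaussian (φ x / δ) ∂m := by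
  set f : Ω → ℝ := fun x => δ⁻¹ * gaussian (φ x / δ)
  have hf0 (x) : 0 ≤ f x := mul_nonneg (inv_pos.2 hδ).le (gaussian_pos _).le
  have hf : Integrable f m := by
    refine (integrable_const δ⁻¹).mono' ?_ (Eventually.of_forall fun x => ?_)
    · exact (continuous_gaussian.comp_aestronglyMeasurable
        (hφ.div_const δ).aestronglyMeasurable).const_mul _
    · rw [Real.norm_of_nonneg (hf0 x)]
      exact mul_le_of_le_one_right (inv_pos.2 hδ).le (gaussian_le_one _)
  have hslab : {x | |φ x| ≤ δ} ⊆ {x | δ⁻¹ * gaussian 1 ≤ f x} := fun x hx => by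
    have hx1 : |φ x / δ| ≤ 1 := by
      rw [abs_div, abs_of_pos hδ]
      exact div_le_one_of_le₀ hx hδ.le
    exact mul_le_mul_of_nonneg_left (gaussian_one_le hx1) (inv_pos.2 hδ).le
  have hgauss := gaussian_pos 1
  calc gaussian 1 * κ = δ⁻¹ * gaussian 1 * (κ * δ) := by field_simp
    _ ≤ δ⁻¹ * gaussian 1 * m.real {x | δ⁻¹ * gaussian 1 ≤ f x} := by
        gcongr
        exact hκ.trans (measureReal_mono hslab)
    _ ≤ ∫ x, f x ∂m := mul_meas_ge_le_integral_of_nonneg (Eventually.of_forall hf0) hf _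

/-- By Fourier inversion the integral over `α` is the density at `0` of the law of `φ`. -/
lemma exists_integral_integral_e_eq_ofReal {κ : ℝ} (hφ : AEMeasurable φ m)
    (hint : Integrable fun α : ℝ => ∫ x, e (α * φ x) ∂m)
    (hκ : ∀ᶠ δ in 𝓝[>] 0, κ * δ ≤ m.real {x | |φ x| ≤ δ}) :
    ∃ r : ℝ, gaussian 1 * κ ≤ r ∧ ∫ α : ℝ, ∫ x, e (α * φ x) ∂m = r := by
  have hclosed : IsClosed (((↑) : ℝ → ℂ) '' Ici (gaussian 1 * κ)) :=
    Complex.isometry_ofReal.isClosedEmbedding.isClosedMap _ isClosed_Ici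
  have hmem : ∀ᶠ δ in 𝓝[>] (0 : ℝ), ∫ α, (∫ x, e (α * φ x) ∂m) * gaussian (δ * α) ∈
      ((↑) : ℝ → ℂ) '' Ici (gaussian 1 * κ) := by
    filter_upwards [hκ, self_mem_nhdsWithin] with δ hκδ hδ
    exact ⟨_, gaussian_one_mul_le_integral hφ hδ hκδ,
      (integral_integral_e_mul_gaussian hφ hδ).symm⟩
  obtain ⟨r, hr, hreq⟩ := hclosed.mem_of_tendsto (tendsto_integral_mul_gaussian hint) hmem
  exact ⟨r, hr, hreq.symm⟩

end CharacteristicIntegral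

/-! ### Slabs around a level set of `∑ i, g (t i)` -/

lemma mul_measure_le_measure_prod {Ω Ω' : Type*} [MeasurableSpace Ω] [MeasurableSpace Ω']
    {m : Measure Ω} {ν : Measure Ω'} [SFinite ν] {A : Set (Ω × Ω')} {B : Set Ω} {η : ENNReal}
    (hA : MeasurableSet A) (hB : ∀ x ∈ B, η ≤ ν (Prod.mk x ⁻¹' A)) :
    η * m B ≤ m.prod ν A :=
  calc η * m B ≤ η * m {x | η ≤ ν (Prod.mk x ⁻¹' A)} := by gcongr; exact hB
    _ ≤ ∫⁻ x, ν (Prod.mk x ⁻¹' A) ∂m :=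
        mul_meas_ge_le_lintegral (measurable_measure_prodMk_left hA) η
    _ = m.prod ν A := (Measure.prod_apply hA).symm

section Slab

variable {g : ℝ → ℝ} {a b : ℝ} {K : ℝ≥0}

lemma exists_lipschitzOnWith_Icc (hg : ∀ t ∈ Icc a b, ContDiffAt ℝ 1 g t) :
    ∃ K : ℝ≥0, 0 < K ∧ LipschitzOnWith K g (Icc a b) := by
  have hcont : ContinuousOn (deriv g) (Icc a b) := fun t ht =>
    (continuousAt_deriv_of_contDiffAt (hg t ht)).continuousWithinAt
  obtain ⟨C, hC⟩ := isCompact_Icc.exists_bound_of_continuousOn hcont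
  refine ⟨C.toNNReal + 1, by positivity, ?_⟩
  refine (convex_Icc a b).lipschitzOnWith_of_nnnorm_deriv_le
    (fun t ht => (hg t ht).differentiableAt one_ne_zero) fun t ht => ?_
  exact (NNReal.le_toNNReal_of_coe_le (hC t ht)).trans (le_add_of_nonneg_right zero_le_one)

lemma ofReal_le_volume_slice {t₀ η : ℝ} (hg : LipschitzOnWith K g (Icc a b))
    (ht₀ : t₀ ∈ Icc a b) (hη : 2 * η ≤ b - a) :
    ENNReal.ofReal η ≤ volume.restrict (Ioc a b) {t | |g t - g t₀| ≤ K * η} := by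
  obtain ⟨u, hau, hub, hu⟩ :
      ∃ u, a ≤ u ∧ u + η ≤ b ∧ ∀ t ∈ Ioc u (u + η), |t - t₀| ≤ η := by
    rcases le_total (t₀ + η) b with hright | hleft
    · exact ⟨t₀, ht₀.1, hright, fun t ht => abs_le.2 ⟨by linarith [ht.1, ht.2], by linarith [ht.2]⟩⟩
    · exact ⟨t₀ - η, by linarith, by linarith [ht₀.2],
        fun t ht => abs_le.2 ⟨by linarith [ht.1], by linarith [ht.1, ht.2]⟩⟩
  have hsub : Ioc u (u + η) ⊆ {t | |g t - g t₀| ≤ K * η} ∩ Ioc a b := fun t ht => by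
    have htab : t ∈ Ioc a b := ⟨hau.trans_lt ht.1, ht.2.trans hub⟩
    refine ⟨?_, htab⟩
    calc |g t - g t₀| ≤ K * |t - t₀| := hg.dist_le_mul t (Ioc_subset_Icc_self htab) t₀ ht₀
      _ ≤ K * η := by gcongr; exact hu t ht
  calc ENNReal.ofReal η = volume (Ioc u (u + η)) := by rw [Real.volume_Ioc, add_sub_cancel_left]
    _ ≤ volume ({t | |g t - g t₀| ≤ K * η} ∩ Ioc a b) := measure_mono hsub
    _ = volume.restrict (Ioc a b) {t | |g t - g t₀| ≤ K * η} :=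
        (Measure.restrict_apply' measurableSet_Ioc).symm

/-- Lebesgue measure on the cube `(a, b]^(n + 1)`, with the last coordinate split off because the
slab estimate solves for it. -/
noncomputable def cubeMeasure (n : ℕ) (a b : ℝ) : Measure ((Fin n → ℝ) × ℝ) :=
  (Measure.pi fun _ => volume.restrict (Ioc a b)).prod (volume.restrict (Ioc a b))

instance (n : ℕ) (a b : ℝ) : IsFiniteMeasure (cubeMeasure n a b) := by
  unfold cubeMeasure
  infer_instance

/-- The phase `g(t₁) + ⋯ + g(t_(n+1)) - y` on the cube. -/
def totalPhase (n : ℕ) (g : ℝ → ℝ) (y : ℝ) (p : (Fin n → ℝ) × ℝ) : ℝ :=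
  ∑ i, g (p.1 i) + g p.2 - y

lemma continuous_totalPhase (hg : Continuous g) (n : ℕ) (y : ℝ) :
    Continuous (totalPhase n g y) := by
  unfold totalPhase
  fun_prop

lemma e_mul_oscillatoryIntegral_pow (hab : a ≤ b) (n : ℕ) (y α : ℝ) :
    e (-y * α) * oscillatoryIntegral g a b α ^ (n + 1) =
      ∫ p, e (α * totalPhase n g y p) ∂(cubeMeasure n a b) := by
  have hsplit (p : (Fin n → ℝ) × ℝ) : e (α * totalPhase n g y p) =
      e (-y * α) * ((∏ i, e (α * g (p.1 i))) * e (α * g p.2)) := by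
    rw [← e_sum, ← e_add, ← e_add, ← Finset.mul_sum, totalPhase]
    ring_nf
  simp_rw [hsplit]
  rw [integral_const_mul, cubeMeasure,
    integral_prod_mul (fun q : Fin n → ℝ => ∏ i, e (α * g (q i))) fun t => e (α * g t),
    integral_fintype_prod_eq_pow fun t => e (α * g t), Fintype.card_fin, ← pow_succ,
    oscillatoryIntegral, intervalIntegral.integral_of_le hab]

lemma pi_restrict_pos_of_isOpen {n : ℕ} {U : Set (Fin n → ℝ)} {q : Fin n → ℝ}
    (hU : IsOpen U) (hqU : q ∈ U) (hq : ∀ i, q i ∈ Ioo a b) :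
    0 < (Measure.pi fun _ => volume.restrict (Ioc a b)) U := by
  rw [← Measure.restrict_pi_pi, Measure.restrict_apply hU.measurableSet, ← volume_pi]
  have hopen : IsOpen (U ∩ univ.pi fun _ => Ioo a b) :=
    hU.inter (isOpen_set_pi finite_univ fun _ _ => isOpen_Ioo)
  exact (hopen.measure_pos volume ⟨q, hqU, fun i _ => hq i⟩).trans_le
    (measure_mono (inter_subset_inter_right _ (pi_mono fun _ _ => Ioo_subset_Ioc_self)))

lemma ofReal_le_volume_totalPhase_slice {n : ℕ} {q : Fin n → ℝ} {y η : ℝ}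
    (hg : LipschitzOnWith K g (Icc a b)) (hq : y - ∑ i, g (q i) ∈ g '' Icc a b)
    (hη : 2 * η ≤ b - a) :
    ENNReal.ofReal η ≤
      volume.restrict (Ioc a b) (Prod.mk q ⁻¹' {p | |totalPhase n g y p| ≤ K * η}) := by
  obtain ⟨t₀, ht₀, hgt₀⟩ := hq
  refine (ofReal_le_volume_slice hg ht₀ hη).trans (measure_mono fun t ht => ?_)
  have hphase : totalPhase n g y (q, t) = g t - g t₀ := by
    rw [totalPhase, hgt₀]
    ring
  rwa [mem_preimage, mem_ofPred_eq, hphase]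

lemma exists_mul_le_cubeMeasure_slab {x₀ : ℝ} (n : ℕ) (hcont : Continuous g)
    (hK : 0 < K) (hg : LipschitzOnWith K g (Icc a b)) (hx₀ : x₀ ∈ Ioo a b)
    (himage : g '' Icc a b ∈ 𝓝 (g x₀)) :
    ∃ κ : ℝ, 0 < κ ∧ ∀ᶠ δ in 𝓝[>] 0,
      κ * δ ≤ (cubeMeasure n a b).real {p | |totalPhase n g ((n + 1) * g x₀) p| ≤ δ} := by
  set y : ℝ := (n + 1) * g x₀ with hy
  set m : Measure (Fin n → ℝ) := Measure.pi fun _ => volume.restrict (Ioc a b)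
  set U : Set (Fin n → ℝ) := {q | y - ∑ i, g (q i) ∈ interior (g '' Icc a b)}
  have hU : IsOpen U := isOpen_interior.preimage (by fun_prop)
  have hdiag : (fun _ => x₀) ∈ U := by
    have : y - ∑ _ : Fin n, g x₀ = g x₀ := by
      rw [Finset.sum_const, Finset.card_univ, Fintype.card_fin, nsmul_eq_mul, hy]
      ring
    rw [mem_ofPred_eq, this]
    exact mem_interior_iff_mem_nhds.2 himage
  have hmU : 0 < m U := pi_restrict_pos_of_isOpen hU hdiag fun _ => hx₀
  have hK' : (0 : ℝ) < K := hK
  refine ⟨m.real U / K, div_pos (ENNReal.toReal_pos hmU.ne' (measure_ne_top _ _)) hK', ?_⟩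
  have hsmall : ∀ᶠ δ in 𝓝[>] (0 : ℝ), δ < K * (b - a) / 2 :=
    nhdsWithin_le_nhds (gt_mem_nhds (by nlinarith [hx₀.1, hx₀.2]))
  filter_upwards [hsmall, self_mem_nhdsWithin] with δ hδ (hδ0 : 0 < δ)
  set A : Set ((Fin n → ℝ) × ℝ) := {p | |totalPhase n g y p| ≤ δ}
  have hA : MeasurableSet A :=
    (isClosed_le (continuous_totalPhase hcont n y).abs continuous_const).measurableSet
  have hη : 2 * (δ / K) ≤ b - a := by
    rw [← mul_div_assoc, div_le_iff₀ hK']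
    linarith
  have hslice : ∀ q ∈ U, ENNReal.ofReal (δ / K) ≤ volume.restrict (Ioc a b) (Prod.mk q ⁻¹' A) :=
    fun q hq => by
      simpa only [mul_div_cancel₀ δ hK'.ne'] using
        ofReal_le_volume_totalPhase_slice hg (interior_subset hq) hη
  calc m.real U / K * δ = (ENNReal.ofReal (δ / K) * m U).toReal := by
        rw [ENNReal.toReal_mul, ENNReal.toReal_ofReal (by positivity), Measure.real]
        ring
    _ ≤ (cubeMeasure n a b).real A :=
        ENNReal.toReal_mono (measure_ne_top _ _) (mul_measure_le_measure_prod hA hslice)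

end Slab

/-! ### Positivity of the singular integral -/

lemma exists_integral_e_mul_oscillatoryIntegral_pow_eq_ofReal {g : ℝ → ℝ} {a b x₀ : ℝ} {k : ℕ}
    (hcont : Continuous g) (hg : ∀ t ∈ Icc a b, ContDiffAt ℝ 2 g t)
    (hg' : ∀ t ∈ Icc a b, deriv g t ≠ 0) (hx₀ : x₀ ∈ Ioo a b) (hk : 2 ≤ k) :
    ∃ r : ℝ, 0 < r ∧ ∫ α, e (-(k * g x₀) * α) * oscillatoryIntegral g a b α ^ k = r := by
  have hab : a ≤ b := (hx₀.1.trans hx₀.2).le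
  have hx₀' : x₀ ∈ Icc a b := Ioo_subset_Icc_self hx₀
  have himage : g '' Icc a b ∈ 𝓝 (g x₀) := by
    rw [← ((hg x₀ hx₀').hasStrictDerivAt two_ne_zero).map_nhds_eq (hg' x₀ hx₀')]
    exact image_mem_map (Icc_mem_nhds hx₀.1 hx₀.2)
  obtain ⟨K, hK, hLip⟩ := exists_lipschitzOnWith_Icc fun t ht => (hg t ht).of_le one_le_two
  obtain ⟨n, rfl⟩ := Nat.exists_eq_add_of_le' (one_le_two.trans hk)
  obtain ⟨κ, hκ, hslab⟩ := exists_mul_le_cubeMeasure_slab n hcont hK hLip hx₀ himage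
  rw [← uIcc_of_le hab] at hg hg'
  have hint := integrable_e_mul_oscillatoryIntegral_pow hcont hg hg' hk ((n + 1) * g x₀)
  rw [Nat.cast_add_one]
  simp_rw [e_mul_oscillatoryIntegral_pow hab] at hint ⊢
  obtain ⟨r, hr, hreq⟩ := exists_integral_integral_e_eq_ofReal
    (continuous_totalPhase hcont n _).aemeasurable hint hslab
  exact ⟨r, (mul_pos (gaussian_pos 1) hκ).trans_le hr, hreq⟩

lemma I_one (c μ : ℝ) : I c μ 1 = oscillatoryIntegral (fun t => t ^ c) μ 1 := by
  ext α
  rw [I, mul_one, oscillatoryIntegral]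

lemma deriv_rpow_const_ne_zero {c t : ℝ} (hc : c ≠ 0) (ht : 0 < t) :
    deriv (fun s : ℝ => s ^ c) t ≠ 0 := by
  rw [Real.deriv_rpow_const]
  exact mul_ne_zero hc (Real.rpow_pos_of_pos ht _).ne'

lemma integrable_e_mul_I_pow {c μ : ℝ} {k : ℕ} (hc : 0 < c) (hμ : 0 < μ) (hk : 2 ≤ k) (y : ℝ) :
    Integrable (fun α => e (-y * α) * I c μ 1 α ^ k) := by
  have hpos (t) (ht : t ∈ uIcc μ 1) : 0 < t := (lt_min hμ one_pos).trans_le ht.1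
  rw [I_one]
  exact integrable_e_mul_oscillatoryIntegral_pow (Real.continuous_rpow_const hc.le)
    (fun t ht => Real.contDiffAt_rpow_const_of_ne (hpos t ht).ne')
    (fun t ht => deriv_rpow_const_ne_zero hc.ne' (hpos t ht)) hk y

lemma exists_integral_e_mul_I_pow_eq_ofReal {c μ : ℝ} {k : ℕ} (hc : 0 < c) (hμ : 0 < μ)
    (hk : 2 ≤ k) (hkμ : k * μ ^ c < 1) :
    ∃ r : ℝ, 0 < r ∧ ∫ α, e (-1 * α) * I c μ 1 α ^ k = r := by
  have hk1 : (1 : ℝ) < k := by exact_mod_cast hk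
  obtain ⟨x₀, hx₀, hkx₀⟩ : ∃ x₀ ∈ Ioo μ 1, k * x₀ ^ c = 1 := by
    have hpow : ((k : ℝ)⁻¹ ^ c⁻¹) ^ c = (k : ℝ)⁻¹ := Real.rpow_inv_rpow (by positivity) hc.ne'
    refine ⟨(k : ℝ)⁻¹ ^ c⁻¹, ⟨?_, ?_⟩, ?_⟩
    · rwa [Real.lt_rpow_inv_iff_of_pos hμ.le (by positivity) hc, ← one_div,
        lt_div_iff₀' (by positivity)]
    · exact Real.rpow_lt_one (by positivity) (inv_lt_one_of_one_lt₀ hk1) (inv_pos.2 hc)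
    · rw [hpow, mul_inv_cancel₀ (by positivity)]
  have hpos (t) (ht : t ∈ Icc μ 1) : 0 < t := hμ.trans_le ht.1
  have hval := exists_integral_e_mul_oscillatoryIntegral_pow_eq_ofReal
    (Real.continuous_rpow_const hc.le)
    (fun t ht => Real.contDiffAt_rpow_const_of_ne (hpos t ht).ne')
    (fun t ht => deriv_rpow_const_ne_zero hc.ne' (hpos t ht)) hx₀ hk
  rwa [hkx₀, ← I_one] at hval

lemma I_eq_mul_I_one {c μ X : ℝ} (hμ : 0 ≤ μ) (hX : 0 ≤ X) (α : ℝ) :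
    I c μ X α = X * I c μ 1 (X ^ c * α) := by
  have hsubst := intervalIntegral.smul_integral_comp_mul_left (a := μ) (b := 1)
    (fun t => e (α * t ^ c)) X
  rw [mul_one, Complex.real_smul] at hsubst
  rw [I, I, mul_comm μ X, mul_one, ← hsubst]
  congr 1
  refine intervalIntegral.integral_congr fun t ht => ?_
  have ht0 : 0 ≤ t := (le_min hμ zero_le_one).trans ht.1
  simp only [Real.mul_rpow hX ht0]
  ring_nf

theorem stmt_15_general {c μ : ℝ} {k : ℕ} (hc : 0 < c) (hμ : 0 < μ) (hk : 2 ≤ k)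
    (hkμ : k * μ ^ c < 1) :
    ∃ c₀ : ℝ, 0 < c₀ ∧ ∀ X : ℝ, 0 < X →
      Integrable (fun α : ℝ => e (-(X ^ c) * α) * (I c μ X α) ^ k) ∧
      ∫ α : ℝ, e (-(X ^ c) * α) * (I c μ X α) ^ k = (c₀ * X ^ (k - c) : ℝ) := by
  obtain ⟨c₀, hc₀, hval⟩ := exists_integral_e_mul_I_pow_eq_ofReal hc hμ hk hkμ
  refine ⟨c₀, hc₀, fun X hX => ?_⟩
  have hXc : 0 < X ^ c := Real.rpow_pos_of_pos hX c
  set G : ℝ → ℂ := fun α => e (-1 * α) * I c μ 1 α ^ k with hG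
  have hscale : (fun α => e (-(X ^ c) * α) * I c μ X α ^ k) =
      fun α => ((X ^ k : ℝ) : ℂ) * G (X ^ c * α) := by
    funext α
    rw [I_eq_mul_I_one hμ.le hX.le, hG, Complex.ofReal_pow]
    ring_nf
  rw [hscale]
  refine ⟨((integrable_e_mul_I_pow hc hμ hk 1).comp_mul_left' hXc.ne').const_mul _, ?_⟩
  rw [integral_const_mul, Measure.integral_comp_mul_left, hval, abs_of_pos (inv_pos.2 hXc),
    Complex.real_smul, ← Complex.ofReal_mul, ← Complex.ofReal_mul, Real.rpow_sub hX,
    Real.rpow_natCast]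
  ring_nf

theorem stmt_15 (c μ : ℝ) (hc : 1 < c) (hμ1 : 0 < μ) (hμ2 : μ ≤ 1 / 3) :
    ∃ c₀ : ℝ, 0 < c₀ ∧ ∃ X₀ : ℝ,
      ∀ X : ℝ, X₀ ≤ X →
        Integrable (fun α : ℝ => e (-(X ^ c) * α) * (I c μ X α) ^ 3) ∧
        (∫ α : ℝ, e (-(X ^ c) * α) * (I c μ X α) ^ 3).im = 0 ∧
        c₀ * X ^ (3 - c) ≤ (∫ α : ℝ, e (-(X ^ c) * α) * (I c μ X α) ^ 3).re := by
  have hμc : μ ^ c < μ := Real.rpow_lt_self_of_lt_one hμ1 (by linarith) hc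
  obtain ⟨c₀, hc₀, h⟩ := stmt_15_general (c := c) (k := 3) (by linarith) hμ1 (by norm_num)
    (by push_cast; linarith)
  refine ⟨c₀, hc₀, 1, fun X hX => ?_⟩
  obtain ⟨hint, heq⟩ := h X (by linarith)
  refine ⟨hint, ?_, ?_⟩ <;> rw [heq]
  · exact Complex.ofReal_im _
  · exact le_rfl
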